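/- arXiv:2008.02524 — 2 statements merged into one kernel-verified Lean document; each statement's English description precedes it below -/
import Mathlib

section
/- Let 1 ≤ q < 2 and define F(t) = (1 - t)^{2-q} · Σ_{n=0}^∞ (Γ(n + 1 - q/2) · Γ(n + 2 - q/2)) / (Γ(1 - q/2) · Γ(2 - q/2) · (n!)²) · t^n for t ∈ [0,1). Then F is a decreasing (monotone nonincreasing) function of t on [0,1). -/
open MeasureTheory Complex Filter

noncomputable section

/-!
The series is `₂F₁ a b 1 t` with `a = 1 - q / 2` and `b = 2 - q / 2`, and the exponent `2 - q` is
`a + b - 1`. More generally let `0 < a ≤ c ≤ b` and `s = a + b - c`. The coefficients `uₙ` of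
`f = ₂F₁ a b c` satisfy `(n + 1) uₙ₊₁ = (a + n) (b + n) / (c + n) uₙ`, and
`(c + n) (n + s) - (a + n) (b + n) = (c - a) (b - c) ≥ 0`, so `(n + 1) uₙ₊₁ ≤ (n + s) uₙ`. Summing
against `tⁿ` gives `f' ≤ t f' + s f`, that is `(1 - t) f' ≤ s f`, which says that the derivative of
`(1 - t) ^ s * f t` is nonpositive.
-/

section PowerSeries

variable {𝕜 E : Type*} [NontriviallyNormedField 𝕜] [NormedAddCommGroup E] [NormedSpace 𝕜 E]
  [CompleteSpace E]

theorem hasSum_deriv_of_hasFPowerSeriesOnBall {f : 𝕜 → E} {p : FormalMultilinearSeries 𝕜 𝕜 E}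
    {x y : 𝕜} {r : ENNReal} (hf : HasFPowerSeriesOnBall f p x r) (hy : y ∈ Metric.eball 0 r) :
    HasSum (fun n : ℕ ↦ y ^ n • (n + 1) • p.coeff (n + 1)) (deriv f (x + y)) := by
  have h := (hf.fderiv.hasSum hy).mapL (ContinuousLinearMap.apply 𝕜 E (1 : 𝕜))
  simpa using h

theorem hasSum_smul_deriv_of_hasFPowerSeriesOnBall {f : 𝕜 → E}
    {p : FormalMultilinearSeries 𝕜 𝕜 E} {x y : 𝕜} {r : ENNReal}
    (hf : HasFPowerSeriesOnBall f p x r) (hy : y ∈ Metric.eball 0 r) :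
    HasSum (fun n : ℕ ↦ y ^ n • n • p.coeff n) (y • deriv f (x + y)) := by
  have h := (hasSum_deriv_of_hasFPowerSeriesOnBall hf hy).const_smul y
  rw [← hasSum_nat_add_iff' 1]
  simpa [smul_smul, pow_succ'] using h

end PowerSeries

theorem one_sub_mul_deriv_le_of_coeff_succ_le {f : ℝ → ℝ} {p : FormalMultilinearSeries ℝ ℝ ℝ}
    {s t : ℝ} {r : ENNReal} (hf : HasFPowerSeriesOnBall f p 0 r)
    (hp : ∀ n : ℕ, (n + 1) * p.coeff (n + 1) ≤ (n + s) * p.coeff n)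
    (ht₀ : 0 ≤ t) (ht : t ∈ Metric.eball 0 r) : (1 - t) * deriv f t ≤ s * f t := by
  have hderiv : HasSum (fun n : ℕ ↦ t ^ n * ((n + 1) * p.coeff (n + 1))) (deriv f t) := by
    simpa using hasSum_deriv_of_hasFPowerSeriesOnBall hf ht
  have hmul_deriv : HasSum (fun n : ℕ ↦ t ^ n * (n * p.coeff n)) (t * deriv f t) := by
    simpa using hasSum_smul_deriv_of_hasFPowerSeriesOnBall hf ht
  have hmul : HasSum (fun n : ℕ ↦ s * (t ^ n * p.coeff n)) (s * f t) := by
    simpa using (hf.hasSum ht).mul_left s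
  have hle : deriv f t ≤ t * deriv f t + s * f t := by
    refine hasSum_le (fun n ↦ ?_) hderiv (hmul_deriv.add hmul)
    calc t ^ n * ((n + 1) * p.coeff (n + 1))
        ≤ t ^ n * ((n + s) * p.coeff n) := mul_le_mul_of_nonneg_left (hp n) (by positivity)
      _ = t ^ n * (n * p.coeff n) + s * (t ^ n * p.coeff n) := by ring
  linarith

theorem antitoneOn_sub_rpow_mul_of_mul_deriv_le {D : Set ℝ} (hD : Convex ℝ D) {b s : ℝ}
    (hDb : D ⊆ Set.Iio b) {f : ℝ → ℝ} (hf : ContinuousOn f D)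
    (hf' : DifferentiableOn ℝ f (interior D))
    (hle : ∀ t ∈ interior D, (b - t) * deriv f t ≤ s * f t) :
    AntitoneOn (fun t ↦ (b - t) ^ s * f t) D := by
  have hpos : ∀ t ∈ D, 0 < b - t := fun t ht ↦ sub_pos.2 (hDb ht)
  refine antitoneOn_of_hasDerivWithinAt_nonpos hD
    (f' := fun t ↦ -1 * s * (b - t) ^ (s - 1) * f t + (b - t) ^ s * deriv f t)
    (((continuousOn_const.sub continuousOn_id).rpow_const
      fun t ht ↦ .inl (hpos t ht).ne').mul hf) (fun t ht ↦ ?_) (fun t ht ↦ ?_)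
  · have hbase : HasDerivAt (fun t ↦ b - t) (-1) t := (hasDerivAt_id t).const_sub b
    have hft := (hf'.differentiableAt (isOpen_interior.mem_nhds ht)).hasDerivAt
    exact ((hbase.rpow_const (.inl (hpos t (interior_subset ht)).ne')).mul hft).hasDerivWithinAt
  · have hbt := hpos t (interior_subset ht)
    have hpow : (b - t) ^ s = (b - t) ^ (s - 1) * (b - t) := by
      rw [← Real.rpow_add_one hbt.ne', sub_add_cancel]
    calc -1 * s * (b - t) ^ (s - 1) * f t + (b - t) ^ s * deriv f t
        = (b - t) ^ (s - 1) * ((b - t) * deriv f t - s * f t) := by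
          rw [hpow]; ring
      _ ≤ 0 := mul_nonpos_of_nonneg_of_nonpos (Real.rpow_nonneg hbt.le _)
          (sub_nonpos.2 (hle t ht))

theorem antitoneOn_one_sub_rpow_mul_of_coeff_succ_le {f : ℝ → ℝ}
    {p : FormalMultilinearSeries ℝ ℝ ℝ} {s : ℝ} (hf : HasFPowerSeriesOnBall f p 0 1)
    (hp : ∀ n : ℕ, (n + 1) * p.coeff (n + 1) ≤ (n + s) * p.coeff n) :
    AntitoneOn (fun t ↦ (1 - t) ^ s * f t) (Set.Ico 0 1) := by
  have hball : Set.Ico (0 : ℝ) 1 ⊆ Metric.eball 0 1 := fun t ht ↦ by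
    rw [← ENNReal.ofReal_one, Metric.eball_ofReal]
    simpa [abs_of_nonneg ht.1] using ht.2
  have hdiff : DifferentiableOn ℝ f (Set.Ico 0 1) := hf.differentiableOn.mono hball
  refine antitoneOn_sub_rpow_mul_of_mul_deriv_le (convex_Ico 0 1) (fun t ht ↦ ht.2)
    hdiff.continuousOn (hdiff.mono interior_subset) fun t ht ↦ ?_
  have ht' := interior_subset ht
  exact one_sub_mul_deriv_le_of_coeff_succ_le hf hp ht'.1 (hball ht')

section Hypergeometric

theorem add_one_mul_ordinaryHypergeometricCoefficient_succ {𝕂 : Type*} [Field 𝕂] [CharZero 𝕂]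
    (a b c : 𝕂) (n : ℕ) :
    (n + 1) * ordinaryHypergeometricCoefficient a b c (n + 1) =
      (a + n) * (b + n) / (c + n) * ordinaryHypergeometricCoefficient a b c n := by
  have hn : (n + 1 : 𝕂) ≠ 0 := n.cast_add_one_ne_zero
  simp only [ordinaryHypergeometricCoefficient, ascPochhammer_succ_eval, Nat.factorial_succ,
    Nat.cast_mul, Nat.cast_succ, mul_inv]
  field_simp

theorem hasFPowerSeriesOnBall_ordinaryHypergeometric {𝕂 : Type*} [RCLike 𝕂] {a b c : 𝕂}
    (habc : ∀ k : ℕ, (k : 𝕂) ≠ -a ∧ (k : 𝕂) ≠ -b ∧ (k : 𝕂) ≠ -c) :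
    HasFPowerSeriesOnBall (₂F₁ a b c : 𝕂 → 𝕂) (ordinaryHypergeometricSeries 𝕂 a b c) 0 1 := by
  have hradius := ordinaryHypergeometricSeries_radius_eq_one 𝕂 a b c habc
  have h := (ordinaryHypergeometricSeries 𝕂 a b c).hasFPowerSeriesOnBall (by simp [hradius])
  rwa [hradius] at h

variable {a b c : ℝ}

theorem ordinaryHypergeometricCoefficient_pos (ha : 0 < a) (hb : 0 < b) (hc : 0 < c) (n : ℕ) :
    0 < ordinaryHypergeometricCoefficient a b c n := by
  have hpa := ascPochhammer_pos n a ha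
  have hpb := ascPochhammer_pos n b hb
  have hpc := ascPochhammer_pos n c hc
  positivity

theorem add_one_mul_ordinaryHypergeometricCoefficient_succ_le (ha : 0 < a) (hac : a ≤ c)
    (hcb : c ≤ b) (n : ℕ) :
    (n + 1) * ordinaryHypergeometricCoefficient a b c (n + 1) ≤
      (n + (a + b - c)) * ordinaryHypergeometricCoefficient a b c n := by
  have hc : 0 < c := ha.trans_le hac
  have hb : 0 < b := hc.trans_le hcb
  rw [add_one_mul_ordinaryHypergeometricCoefficient_succ]
  refine mul_le_mul_of_nonneg_right ?_ (ordinaryHypergeometricCoefficient_pos ha hb hc n).le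
  rw [div_le_iff₀ (by positivity)]
  have hmul : 0 ≤ (c - a) * (b - c) := mul_nonneg (sub_nonneg.2 hac) (sub_nonneg.2 hcb)
  linarith

theorem antitoneOn_one_sub_rpow_mul_ordinaryHypergeometric (ha : 0 < a) (hac : a ≤ c)
    (hcb : c ≤ b) :
    AntitoneOn (fun t : ℝ ↦ (1 - t) ^ (a + b - c) * ₂F₁ a b c t) (Set.Ico 0 1) := by
  have hc : 0 < c := ha.trans_le hac
  have hb : 0 < b := hc.trans_le hcb
  have hne : ∀ (k : ℕ) {x : ℝ}, 0 < x → (k : ℝ) ≠ -x := fun k x hx ↦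
    ((neg_lt_zero.2 hx).trans_le k.cast_nonneg).ne'
  have hF := hasFPowerSeriesOnBall_ordinaryHypergeometric fun k ↦ ⟨hne k ha, hne k hb, hne k hc⟩
  refine antitoneOn_one_sub_rpow_mul_of_coeff_succ_le hF fun n ↦ ?_
  simpa only [ordinaryHypergeometricSeries, FormalMultilinearSeries.coeff_ofScalars] using
    add_one_mul_ordinaryHypergeometricCoefficient_succ_le ha hac hcb n

theorem ascPochhammer_eval_eq_Gamma_div_Gamma {x : ℝ} (hx : ∀ k : ℕ, x ≠ -k) (n : ℕ) :
    (ascPochhammer ℝ n).eval x = Real.Gamma (x + n) / Real.Gamma x := by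
  induction n with
  | zero => simp [div_self (Real.Gamma_ne_zero hx)]
  | succ n ih =>
    have hxn : x + n ≠ 0 := fun h ↦ hx n (eq_neg_of_add_eq_zero_left h)
    rw [ascPochhammer_succ_eval, ih, Nat.cast_succ, ← add_assoc, Real.Gamma_add_one hxn]
    ring

theorem ordinaryHypergeometricCoefficient_eq_Gamma (ha : ∀ k : ℕ, a ≠ -k) (hb : ∀ k : ℕ, b ≠ -k)
    (hc : ∀ k : ℕ, c ≠ -k) (n : ℕ) :
    ordinaryHypergeometricCoefficient a b c n =
      Real.Gamma (a + n) * Real.Gamma (b + n) * Real.Gamma c /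
        (Real.Gamma a * Real.Gamma b * Real.Gamma (c + n) * n.factorial) := by
  rw [ordinaryHypergeometricCoefficient, ascPochhammer_eval_eq_Gamma_div_Gamma ha,
    ascPochhammer_eval_eq_Gamma_div_Gamma hb, ascPochhammer_eval_eq_Gamma_div_Gamma hc, inv_div]
  ring

theorem ordinaryHypergeometric_one_eq_tsum_Gamma (ha : ∀ k : ℕ, a ≠ -k) (hb : ∀ k : ℕ, b ≠ -k)
    (t : ℝ) :
    ₂F₁ a b 1 t = ∑' n : ℕ, Real.Gamma (n + a) * Real.Gamma (n + b) /
      (Real.Gamma a * Real.Gamma b * (n.factorial : ℝ) ^ 2) * t ^ n := by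
  have hone : ∀ k : ℕ, (1 : ℝ) ≠ -k := fun k ↦ by linarith [k.cast_nonneg (α := ℝ)]
  rw [ordinaryHypergeometric_eq_tsum]
  refine tsum_congr fun n ↦ ?_
  have hcoeff := ordinaryHypergeometricCoefficient_eq_Gamma ha hb hone n
  rw [add_comm 1 (n : ℝ), Real.Gamma_nat_eq_factorial, Real.Gamma_one] at hcoeff
  change ordinaryHypergeometricCoefficient a b 1 n * t ^ n = _
  rw [hcoeff, add_comm a, add_comm b]
  ring

end Hypergeometric

theorem F_antitone_general (q : ℝ) (hq0 : 0 ≤ q) (hq2 : q < 2) :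
    AntitoneOn
      (fun t : ℝ => (1 - t) ^ (2 - q) *
        ∑' n : ℕ,
          (Real.Gamma ((n : ℝ) + 1 - q / 2) * Real.Gamma ((n : ℝ) + 2 - q / 2)) /
            (Real.Gamma (1 - q / 2) * Real.Gamma (2 - q / 2) * ((n.factorial : ℝ)) ^ 2) * t ^ n)
      (Set.Ico (0 : ℝ) 1) := by
  have ha : 0 < 1 - q / 2 := by linarith
  have hb : 0 < 2 - q / 2 := by linarith
  have hne : ∀ {x : ℝ}, 0 < x → ∀ k : ℕ, x ≠ -k := fun hx k ↦
    ((neg_nonpos.2 k.cast_nonneg).trans_lt hx).ne'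
  have hexp : 2 - q = (1 - q / 2) + (2 - q / 2) - 1 := by ring
  simp only [add_sub_assoc, ← ordinaryHypergeometric_one_eq_tsum_Gamma (hne ha) (hne hb)]
  rw [hexp]
  exact antitoneOn_one_sub_rpow_mul_ordinaryHypergeometric ha (by linarith) (by linarith)

/-- For 1 ≤ q < 2, the function
F(t) = (1-t)^{2-q} · ₂F₁[1-q/2, 2-q/2; 1; t]
     = (1-t)^{2-q} · Σ_{n≥0} Γ(n+1-q/2)Γ(n+2-q/2)/(Γ(1-q/2)Γ(2-q/2)(n!)²) tⁿ
is nonincreasing on [0,1). -/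
theorem F_antitone (q : ℝ) (hq1 : 1 ≤ q) (hq2 : q < 2) :
    AntitoneOn
      (fun t : ℝ => (1 - t) ^ (2 - q) *
        ∑' n : ℕ,
          (Real.Gamma ((n : ℝ) + 1 - q / 2) * Real.Gamma ((n : ℝ) + 2 - q / 2)) /
            (Real.Gamma (1 - q / 2) * Real.Gamma (2 - q / 2) * ((n.factorial : ℝ)) ^ 2) * t ^ n)
      (Set.Ico (0 : ℝ) 1) :=
  F_antitone_general q (by linarith) hq2
end
end

section
/- Σ_{n=0}^∞ (Γ(n + 1/2)/(n! · Γ(1/2)))² · 1/(2n + 3) = (1 + 2α)/(2π), where α = Σ_{n=0}^∞ (-1)^n/(2n+1)² is the Catalan constant. -/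
open MeasureTheory Complex Filter

noncomputable section

/-- The Catalan constant α = Σ_{n=0}^∞ (-1)^n/(2n+1)². -/
def catalanConst : ℝ := ∑' n : ℕ, (-1 : ℝ) ^ n / (2 * (n : ℝ) + 1) ^ 2

open Ring (multichoose)
open Set
open scoped Real Nat Topology

/-! The coefficient `c n = Γ(n + 1/2) / (n! Γ(1/2))` is `multichoose (1/2) n`, the `n`-th Taylor
coefficient of `(1 - x) ^ (-1/2)`. Hence `∑ c n * s ^ (2n + 1) / (2n + 1) = arcsin s`; substituting
`s = sin x`, dividing by `sin x`, and integrating over `[0, π/2]` with Wallis' integrals gives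
`π/2 * ∑ c n ^ 2 / (2n + 1) = ∫ x / sin x`, which the half-angle substitution `x = 2 arctan t`
turns into `2 * ∫₀¹ arctan t / t = 2α`. Finally `4 c n ^ 2 / (2n + 3) - c n ^ 2 / (2n + 1)`
telescopes, with sum `2/π` by Wallis' product, so that the weights `1 / (2n + 1)` can be traded for
`1 / (2n + 3)`. -/

theorem multichoose_succ {K : Type*} [Field K] [CharZero K] (a : K) (n : ℕ) :
    multichoose a (n + 1) = multichoose a n * ((n + a) / (n + 1)) := by
  have factorial_mul (k : ℕ) : (k ! : K) * multichoose a k = (ascPochhammer ℕ k).smeval a := by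
    rw [← nsmul_eq_mul, Ring.factorial_nsmul_multichoose_eq_ascPochhammer]
  have hn : (n ! : K) ≠ 0 := mod_cast n.factorial_ne_zero
  have hn' : (n + 1 : K) ≠ 0 := n.cast_add_one_ne_zero
  have pochhammer_succ : (ascPochhammer ℕ (n + 1)).smeval a =
      (ascPochhammer ℕ n).smeval a * (n + a) := by
    simp [ascPochhammer_succ_right, Polynomial.smeval_mul, Polynomial.smeval_natCast, add_comm a]
  rw [← factorial_mul, ← factorial_mul, Nat.factorial_succ] at pochhammer_succ
  push_cast at pochhammer_succ
  field_simp
  apply mul_left_cancel₀ hn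
  linear_combination pochhammer_succ

theorem multichoose_pos {a : ℝ} (ha : 0 < a) (n : ℕ) : 0 < multichoose a n := by
  induction n with
  | zero => simp
  | succ n ih =>
    rw [multichoose_succ]
    positivity

theorem Gamma_natCast_add_div_factorial_mul_Gamma {a : ℝ} (ha : ∀ m : ℕ, a ≠ -m) (n : ℕ) :
    Real.Gamma (n + a) / (n ! * Real.Gamma a) = multichoose a n := by
  have hΓ : Real.Gamma a ≠ 0 := Real.Gamma_ne_zero ha
  induction n with
  | zero => simp [hΓ]
  | succ n ih =>
    have hna : (n + a : ℝ) ≠ 0 := fun h ↦ ha n (by linarith)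
    rw [multichoose_succ, ← ih, Nat.factorial_succ, Nat.cast_succ, add_right_comm,
      Real.Gamma_add_one hna]
    push_cast
    field_simp

theorem hasSum_multichoose_mul_pow (a : ℝ) {x : ℝ} (hx : |x| < 1) :
    HasSum (fun n ↦ multichoose a n * x ^ n) (1 / (1 - x) ^ a) := by
  have hx' : x ∈ Metric.eball (0 : ℝ) 1 := by
    rw [← ENNReal.ofReal_one, Metric.eball_ofReal]
    simpa using hx
  simpa [Ring.multichoose_eq, mul_comm] using
    (Real.one_div_one_sub_rpow_hasFPowerSeriesOnBall_zero a).hasSum hx'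

theorem multichoose_one_half_sq_eq_inv_wallis (n : ℕ) :
    multichoose (1 / 2 : ℝ) n ^ 2 = 1 / ((2 * n + 1) * Real.Wallis.W n) := by
  induction n with
  | zero => simp [Real.Wallis.W]
  | succ n ih =>
    have := Real.Wallis.W_pos n
    rw [multichoose_succ, mul_pow, ih, Real.Wallis.W_succ]
    push_cast
    field_simp
    ring

theorem multichoose_one_half_sq_le (n : ℕ) : multichoose (1 / 2 : ℝ) n ^ 2 ≤ 1 / (2 * n + 1) := by
  induction n with
  | zero => simp
  | succ n ih =>
    rw [multichoose_succ, mul_pow]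
    calc multichoose (1 / 2 : ℝ) n ^ 2 * ((n + 1 / 2) / (n + 1)) ^ 2
        ≤ 1 / (2 * n + 1) * ((n + 1 / 2) / (n + 1)) ^ 2 := by gcongr
      _ = (2 * n + 1 : ℝ) / (2 * n + 2) ^ 2 := by field_simp
      _ ≤ 1 / (2 * (n + 1 : ℕ) + 1) := by
        push_cast
        rw [div_le_div_iff₀ (by positivity) (by positivity)]
        linarith

theorem tendsto_two_mul_add_one_mul_multichoose_one_half_sq :
    Tendsto (fun n : ℕ ↦ (2 * n + 1) * multichoose (1 / 2 : ℝ) n ^ 2) atTop (𝓝 (2 / π)) := by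
  have tendsto_inv := Real.Wallis.tendsto_W_nhds_pi_div_two.inv₀ (by positivity)
  rw [inv_div] at tendsto_inv
  refine tendsto_inv.congr fun n ↦ ?_
  rw [multichoose_one_half_sq_eq_inv_wallis]
  field_simp

theorem integral_one_div_sqrt_one_sub_sq {a b : ℝ} (ha : a ∈ Ioo (-1) 1) (hb : b ∈ Ioo (-1) 1) :
    ∫ t in a..b, 1 / √(1 - t ^ 2) = Real.arcsin b - Real.arcsin a := by
  have mem_Ioo {t : ℝ} (ht : t ∈ uIcc a b) : t ∈ Ioo (-1) 1 :=
    ordConnected_Ioo.uIcc_subset ha hb ht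
  refine intervalIntegral.integral_eq_sub_of_hasDerivAt
    (fun t ht ↦ Real.hasDerivAt_arcsin (mem_Ioo ht).1.ne' (mem_Ioo ht).2.ne)
    (ContinuousOn.intervalIntegrable (.div (by fun_prop) (by fun_prop) fun t ht ↦ ?_))
  obtain ⟨ht₁, ht₂⟩ := mem_Ioo ht
  exact (Real.sqrt_pos.2 (by nlinarith)).ne'

theorem hasSum_arcsin {s : ℝ} (hs : |s| < 1) :
    HasSum (fun n : ℕ ↦ multichoose (1 / 2 : ℝ) n * s ^ (2 * n + 1) / (2 * n + 1))
      (Real.arcsin s) := by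
  have sq_le {t : ℝ} (ht : t ∈ uIoc 0 s) : t ^ 2 ≤ s ^ 2 := by
    rw [sq_le_sq]
    simpa using abs_sub_left_of_mem_uIcc (uIoc_subset_uIcc ht)
  have abs_sq_lt {t : ℝ} (ht : t ^ 2 ≤ s ^ 2) : |t ^ 2| < 1 := by
    rw [abs_of_nonneg (sq_nonneg t)]
    exact ht.trans_lt ((sq_lt_one_iff_abs_lt_one s).2 hs)
  have series := intervalIntegral.hasSum_integral_of_dominated_convergence
    (μ := volume) (a := 0) (b := s)
    (F := fun n t ↦ multichoose (1 / 2 : ℝ) n * (t ^ 2) ^ n)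
    (fun n _ ↦ multichoose (1 / 2 : ℝ) n * (s ^ 2) ^ n)
    (fun n ↦ Continuous.aestronglyMeasurable (by fun_prop))
    (fun n ↦ .of_forall fun t ht ↦ by
      have := multichoose_pos one_half_pos n
      rw [Real.norm_of_nonneg (by positivity)]
      exact mul_le_mul_of_nonneg_left (pow_le_pow_left₀ (sq_nonneg t) (sq_le ht) n) this.le)
    (.of_forall fun t _ ↦ (hasSum_multichoose_mul_pow (1 / 2) (abs_sq_lt le_rfl)).summable)
    intervalIntegrable_const
    (.of_forall fun t ht ↦ hasSum_multichoose_mul_pow (1 / 2) (abs_sq_lt (sq_le ht)))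
  simp_rw [← Real.sqrt_eq_rpow, integral_one_div_sqrt_one_sub_sq (a := 0) (by simp) (abs_lt.1 hs),
    Real.arcsin_zero, sub_zero, ← pow_mul, intervalIntegral.integral_const_mul,
    integral_pow] at series
  simpa [mul_div_assoc] using series

theorem hasSum_intervalIntegral_of_summable_integral_norm {ι E : Type*} [Countable ι]
    [NormedAddCommGroup E] [NormedSpace ℝ E] {μ : Measure ℝ} [NullSingletonClass μ]
    {a b : ℝ} (hab : a ≤ b) {F : ι → ℝ → E} {f : ℝ → E}
    (hF : ∀ i, IntervalIntegrable (F i) μ a b)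
    (hF_sum : Summable fun i ↦ ∫ x in a..b, ‖F i x‖ ∂μ)
    (hf : ∀ x ∈ Ioo a b, HasSum (fun i ↦ F i x) (f x)) :
    HasSum (fun i ↦ ∫ x in a..b, F i x ∂μ) (∫ x in a..b, f x ∂μ) := by
  simp only [intervalIntegral.integral_of_le hab, integral_Ioc_eq_integral_Ioo] at hF_sum ⊢
  rw [← setIntegral_congr_fun measurableSet_Ioo fun x hx ↦ (hf x hx).tsum_eq]
  exact hasSum_integral_of_summable_integral_norm
    (fun i ↦ (intervalIntegrable_iff_integrableOn_Ioo_of_le hab).1 (hF i)) hF_sum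

theorem integral_comp_two_mul_arctan {E : Type*} [NormedAddCommGroup E] [NormedSpace ℝ E]
    (f : ℝ → E) (a b : ℝ) :
    ∫ x in 2 * Real.arctan a..2 * Real.arctan b, f x =
      ∫ t in a..b, (2 / (1 + t ^ 2)) • f (2 * Real.arctan t) := by
  refine (intervalIntegral.integral_deriv_smul_comp_of_deriv_nonneg (f := fun t ↦ 2 * Real.arctan t)
    (by fun_prop) (fun t _ ↦ ?_) fun t _ ↦ by positivity).symm
  simpa [div_eq_mul_inv] using (Real.hasDerivAt_arctan t).const_mul 2

theorem sin_two_mul_arctan (t : ℝ) : Real.sin (2 * Real.arctan t) = 2 * t / (1 + t ^ 2) := by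
  rw [Real.sin_two_mul, Real.sin_arctan, Real.cos_arctan, mul_assoc, div_mul_div_comm,
    Real.mul_self_sqrt (by positivity), mul_one, mul_div_assoc]

theorem integral_div_sin_two_mul_arctan (a b : ℝ) :
    ∫ x in 2 * Real.arctan a..2 * Real.arctan b, x / Real.sin x =
      2 * ∫ t in a..b, Real.arctan t / t := by
  rw [integral_comp_two_mul_arctan, ← intervalIntegral.integral_const_mul]
  -- The integrands agree at `t = 0` as well, both being the junk value `0 / 0 = 0` there.
  refine intervalIntegral.integral_congr fun t _ ↦ ?_
  simp only [sin_two_mul_arctan, smul_eq_mul]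
  field_simp

theorem integral_sin_pow_two_mul (n : ℕ) :
    ∫ x in 0..π / 2, Real.sin x ^ (2 * n) = π / 2 * multichoose (1 / 2 : ℝ) n := by
  induction n with
  | zero => simp
  | succ n ih =>
    rw [mul_add_one, integral_sin_pow, ih, multichoose_succ, Real.sin_zero,
      Real.cos_pi_div_two, mul_zero, zero_pow (Nat.succ_ne_zero _), zero_mul, sub_zero, zero_div,
      zero_add]
    push_cast
    field_simp

theorem summable_one_div_two_mul_add_one_sq : Summable fun n : ℕ ↦ 1 / (2 * n + 1 : ℝ) ^ 2 := by
  have odd_injective : Function.Injective fun n : ℕ ↦ 2 * n + 1 := fun m n h ↦ by simpa using h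
  simpa [Function.comp_def] using
    (Real.summable_one_div_nat_pow.2 one_lt_two).comp_injective odd_injective

theorem hasSum_integral_arctan_div {b : ℝ} (hb₀ : 0 ≤ b) (hb₁ : b ≤ 1) :
    HasSum (fun n : ℕ ↦ (-1) ^ n * b ^ (2 * n + 1) / (2 * n + 1 : ℝ) ^ 2)
      (∫ t in 0..b, Real.arctan t / t) := by
  have integral_term (c : ℝ) (n : ℕ) : ∫ t in 0..b, c / (2 * n + 1) * t ^ (2 * n) =
      c * b ^ (2 * n + 1) / (2 * n + 1) ^ 2 := by
    rw [intervalIntegral.integral_const_mul, integral_pow]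
    push_cast
    field_simp
    simp
  have norm_term (n : ℕ) (t : ℝ) :
      ‖(-1 : ℝ) ^ n / (2 * n + 1) * t ^ (2 * n)‖ = 1 / (2 * n + 1) * t ^ (2 * n) := by
    rw [norm_mul, norm_div, norm_pow, norm_neg, norm_one, one_pow,
      Real.norm_of_nonneg (by positivity), Real.norm_of_nonneg ((even_two_mul n).pow_nonneg t)]
  have summable_norm :
      Summable fun n : ℕ ↦ ∫ t in 0..b, ‖(-1 : ℝ) ^ n / (2 * n + 1) * t ^ (2 * n)‖ := by
    simp_rw [norm_term, integral_term, one_mul]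
    refine summable_one_div_two_mul_add_one_sq.of_nonneg_of_le (fun n ↦ by positivity) fun n ↦ ?_
    gcongr
    exact pow_le_one₀ hb₀ hb₁
  simp_rw [← integral_term]
  refine hasSum_intervalIntegral_of_summable_integral_norm hb₀
    (fun n ↦ Continuous.intervalIntegrable (by fun_prop) 0 b) summable_norm fun t ht ↦ ?_
  have ht₀ : t ≠ 0 := ht.1.ne'
  have ht₁ : ‖t‖ < 1 := by
    rw [Real.norm_of_nonneg ht.1.le]
    exact ht.2.trans_le hb₁
  refine ((Real.hasSum_arctan ht₁).div_const t).congr_fun fun n ↦ ?_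
  push_cast
  rw [pow_succ]
  field_simp

theorem integral_arctan_div_eq_catalanConst :
    ∫ t in (0 : ℝ)..1, Real.arctan t / t = catalanConst := by
  simpa [catalanConst] using (hasSum_integral_arctan_div zero_le_one le_rfl).tsum_eq.symm

theorem summable_multichoose_one_half_sq_div :
    Summable fun n : ℕ ↦ multichoose (1 / 2 : ℝ) n ^ 2 / (2 * n + 1) := by
  refine summable_one_div_two_mul_add_one_sq.of_nonneg_of_le (fun n ↦ by positivity) fun n ↦ ?_
  calc multichoose (1 / 2 : ℝ) n ^ 2 / (2 * n + 1) ≤ 1 / (2 * n + 1) / (2 * n + 1) := by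
        gcongr
        exact multichoose_one_half_sq_le n
    _ = 1 / (2 * n + 1) ^ 2 := by rw [div_div, sq]

theorem hasSum_integral_div_sin :
    HasSum (fun n : ℕ ↦ π / 2 * (multichoose (1 / 2 : ℝ) n ^ 2 / (2 * n + 1)))
      (∫ x in 0..π / 2, x / Real.sin x) := by
  have integral_term (n : ℕ) :
      ∫ x in 0..π / 2, multichoose (1 / 2 : ℝ) n / (2 * n + 1) * Real.sin x ^ (2 * n) =
        π / 2 * (multichoose (1 / 2 : ℝ) n ^ 2 / (2 * n + 1)) := by
    rw [intervalIntegral.integral_const_mul, integral_sin_pow_two_mul]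
    ring
  have norm_term (n : ℕ) (x : ℝ) :
      ‖multichoose (1 / 2 : ℝ) n / (2 * n + 1) * Real.sin x ^ (2 * n)‖ =
        multichoose (1 / 2 : ℝ) n / (2 * n + 1) * Real.sin x ^ (2 * n) := by
    have := multichoose_pos one_half_pos n
    have := (even_two_mul n).pow_nonneg (Real.sin x)
    exact Real.norm_of_nonneg (by positivity)
  simp_rw [← integral_term]
  refine hasSum_intervalIntegral_of_summable_integral_norm (by positivity)
    (fun n ↦ Continuous.intervalIntegrable (by fun_prop) 0 _) ?_ fun x hx ↦ ?_
  · simp_rw [norm_term, integral_term]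
    exact summable_multichoose_one_half_sq_div.mul_left _
  · obtain ⟨hx₀, hx₁⟩ := hx
    have sin_pos : 0 < Real.sin x := Real.sin_pos_of_pos_of_lt_pi hx₀ (by linarith)
    have sin_lt_one : Real.sin x < 1 := by
      simpa using Real.sin_lt_sin_of_lt_of_le_pi_div_two (by linarith) le_rfl hx₁
    have series := hasSum_arcsin (abs_lt.2 ⟨by linarith, sin_lt_one⟩)
    rw [Real.arcsin_sin (by linarith) hx₁.le] at series
    refine (series.div_const (Real.sin x)).congr_fun fun n ↦ ?_
    rw [pow_succ]
    field_simp

theorem hasSum_multichoose_one_half_sq_div_two_mul_add_one :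
    HasSum (fun n : ℕ ↦ multichoose (1 / 2 : ℝ) n ^ 2 / (2 * n + 1)) (4 * catalanConst / π) := by
  have integral_eq : ∫ x in 0..π / 2, x / Real.sin x = 2 * catalanConst := by
    have half_angle := integral_div_sin_two_mul_arctan 0 1
    rwa [Real.arctan_zero, mul_zero, Real.arctan_one, show 2 * (π / 4) = π / 2 by ring,
      integral_arctan_div_eq_catalanConst] at half_angle
  have value_eq : π / 2 * (4 * catalanConst / π) = 2 * catalanConst := by
    field_simp
    norm_num
  rw [← hasSum_mul_left_iff (by positivity : π / 2 ≠ 0), value_eq, ← integral_eq]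
  exact hasSum_integral_div_sin

theorem sum_range_four_mul_sub_multichoose_one_half_sq (N : ℕ) :
    ∑ n ∈ Finset.range N, (4 * (multichoose (1 / 2 : ℝ) n ^ 2 / (2 * n + 3)) -
        multichoose (1 / 2 : ℝ) n ^ 2 / (2 * n + 1)) =
      (N / (N + 1 / 2)) ^ 2 * ((2 * N + 1) * multichoose (1 / 2 : ℝ) N ^ 2) := by
  induction N with
  | zero => simp
  | succ N ih =>
    rw [Finset.sum_range_succ, ih, multichoose_succ]
    push_cast
    field_simp
    ring

theorem hasSum_four_mul_sub_multichoose_one_half_sq :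
    HasSum (fun n : ℕ ↦ 4 * (multichoose (1 / 2 : ℝ) n ^ 2 / (2 * n + 3)) -
      multichoose (1 / 2 : ℝ) n ^ 2 / (2 * n + 1)) (2 / π) := by
  have summable_div_add_three :
      Summable fun n : ℕ ↦ multichoose (1 / 2 : ℝ) n ^ 2 / (2 * n + 3) :=
    summable_multichoose_one_half_sq_div.of_nonneg_of_le (fun n ↦ by positivity) fun n ↦ by
      gcongr
      norm_num
  rw [((summable_div_add_three.mul_left 4).sub
    summable_multichoose_one_half_sq_div).hasSum_iff_tendsto_nat]
  simp_rw [sum_range_four_mul_sub_multichoose_one_half_sq]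
  simpa using ((tendsto_natCast_div_add_atTop (1 / 2 : ℝ)).pow 2).mul
    tendsto_two_mul_add_one_mul_multichoose_one_half_sq

theorem hasSum_multichoose_one_half_sq_div_two_mul_add_three :
    HasSum (fun n : ℕ ↦ multichoose (1 / 2 : ℝ) n ^ 2 / (2 * n + 3))
      ((1 + 2 * catalanConst) / (2 * π)) := by
  have value_eq : (1 + 2 * catalanConst) / (2 * π) = (2 / π + 4 * catalanConst / π) / 4 := by
    field_simp
    ring
  rw [value_eq]
  exact ((hasSum_four_mul_sub_multichoose_one_half_sq.add
    hasSum_multichoose_one_half_sq_div_two_mul_add_one).div_const 4).congr_fun fun n ↦ by ring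

/-- Σ_{n≥0} (Γ(n+1/2)/(n! Γ(1/2)))² /(2n+3) = (1+2α)/(2π), α the Catalan constant. -/
theorem sum_eq_catalan :
    ∑' n : ℕ,
        (Real.Gamma ((n : ℝ) + 1 / 2) / ((n.factorial : ℝ) * Real.Gamma (1 / 2))) ^ 2 *
          (1 / (2 * (n : ℝ) + 3))
      = (1 + 2 * catalanConst) / (2 * Real.pi) := by
  have half_ne_neg (m : ℕ) : (1 / 2 : ℝ) ≠ -m := by
    linarith [m.cast_nonneg (α := ℝ)]
  simp_rw [Gamma_natCast_add_div_factorial_mul_Gamma half_ne_neg, mul_one_div]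
  exact hasSum_multichoose_one_half_sq_div_two_mul_add_three.tsum_eq
end
end
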